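/- Let (G,I,O) be an open graph with focused gFlow (g,≺), and let u, v be adjacent vertices of G with u,v ∉ I ∪ O. Define g'(w) := g(w) ∖ {u,v} for every w ∈ V ∖ (O ∪ {u,v}). Then (g',≺) (with ≺ restricted to V ∖ {u,v}) is a focused gFlow for the open graph ((G∧uv) ∖ {u,v}, I, O). -/

import Mathlib

open Finset symmDiff

variable {V : Type*}

/-- The neighbourhood of a vertex as a `Finset`. -/
def nbhd [Fintype V] [DecidableEq V] (G : SimpleGraph V) [DecidableRel G.Adj] (v : V) :
    Finset V :=
  Finset.univ.filter (G.Adj v)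

/-- The odd neighbourhood of a set of vertices: all vertices with an odd number of
neighbours in `A`. -/
def oddNbhd [Fintype V] [DecidableEq V] (G : SimpleGraph V) [DecidableRel G.Adj]
    (A : Finset V) : Finset V :=
  Finset.univ.filter fun w => Odd (A.filter (G.Adj w)).card

/-- Local complementation of `G` at the vertex `u`. -/
def localComp (G : SimpleGraph V) (u : V) : SimpleGraph V where
  Adj v w := v ≠ w ∧ Xor' (G.Adj v w) (G.Adj u v ∧ G.Adj u w)
  symm := by
    constructor
    rintro v w ⟨h1, h2⟩
    exact ⟨h1.symm, by rwa [G.adj_comm v w, and_comm] at h2⟩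
  loopless := by constructor; rintro v ⟨h, -⟩; exact h rfl

instance {a b : Prop} [Decidable a] [Decidable b] : Decidable (Xor' a b) :=
  inferInstanceAs (Decidable ((a ∧ ¬b) ∨ (b ∧ ¬a)))

instance [DecidableEq V] (G : SimpleGraph V) [DecidableRel G.Adj] (u : V) :
    DecidableRel (localComp G u).Adj :=
  fun v w => inferInstanceAs (Decidable (v ≠ w ∧ Xor' (G.Adj v w) (G.Adj u v ∧ G.Adj u w)))

/-- The pivot of `G` along the edge `uv`. -/
def pivot (G : SimpleGraph V) (u v : V) : SimpleGraph V :=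
  localComp (localComp (localComp G u) v) u

instance [DecidableEq V] (G : SimpleGraph V) [DecidableRel G.Adj] (u v : V) :
    DecidableRel (pivot G u v).Adj :=
  inferInstanceAs (DecidableRel (localComp (localComp (localComp G u) v) u).Adj)

instance {α β : Type*} (G : SimpleGraph β) [DecidableRel G.Adj] (f : α → β) :
    DecidableRel (G.comap f).Adj :=
  fun a b => inferInstanceAs (Decidable (G.Adj (f a) (f b)))

/-- `(g, r)` is a focused gFlow on the open graph `(G, I, O)`: `r` is a strict partial
order, each correction set `g u` (for `u ∉ O`) avoids the inputs, its odd neighbourhood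
meets the non-outputs exactly in `{u}`, and `g u` lies strictly in the future of `u`. -/
def IsFocusedGFlow [Fintype V] [DecidableEq V] (G : SimpleGraph V) [DecidableRel G.Adj]
    (I O : Finset V) (g : V → Finset V) (r : V → V → Prop) : Prop :=
  (∀ a, ¬ r a a) ∧ (∀ a b c, r a b → r b c → r a c) ∧
    ∀ u ∉ O, g u ∩ I = ∅ ∧ oddNbhd G (g u) \ O = {u} ∧ ∀ v ∈ g u, r u v

/-- The open graph `(G, I, O)` admits a focused gFlow. -/
def HasFocusedGFlow [Fintype V] [DecidableEq V] (G : SimpleGraph V) [DecidableRel G.Adj]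
    (I O : Finset V) : Prop :=
  ∃ g r, IsFocusedGFlow G I O g r

/-!
Write `a` for the adjacency matrix over a ring of characteristic two. Complementing at `u` adds
`a u x * a u y` to every off-diagonal entry `a x y`, so pivoting along `uv` adds
`a u x * a v y + a v x * a u y` to every entry outside the rows and columns of `u` and `v`. Summing
over `y ∈ g w`, the two corrections carry the factors `∑ a v y` and `∑ a u y`, which vanish because
`u` and `v` are non-outputs different from `w`. The entries at `y = u` and `y = v` contribute
nothing either, so `u` and `v` may be dropped from `g w`.
-/

theorem localComp_adj (G : SimpleGraph V) {u x y : V} :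
    (localComp G u).Adj x y ↔ x ≠ y ∧ Xor (G.Adj x y) (G.Adj u x ∧ G.Adj u y) :=
  Iff.rfl

section AdjMatrix

theorem adjMatrix_localComp_left (R : Type*) [Zero R] [One R] [DecidableEq V]
    (G : SimpleGraph V) [DecidableRel G.Adj] (u x : V) :
    (localComp G u).adjMatrix R u x = G.adjMatrix R u x := by
  have hadj : (localComp G u).Adj u x ↔ G.Adj u x := by
    simp only [localComp_adj, G.irrefl, xor_def, false_and, not_false_eq_true, and_true,
      or_false]
    exact and_iff_right_of_imp SimpleGraph.Adj.ne
  simp only [SimpleGraph.adjMatrix_apply, hadj]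

variable (R : Type*) [CommRing R] [CharP R 2] (G : SimpleGraph V) [DecidableRel G.Adj]
  [DecidableEq V]

theorem adjMatrix_localComp_of_ne (u : V) {x y : V} (hxy : x ≠ y) :
    (localComp G u).adjMatrix R x y =
      G.adjMatrix R x y + G.adjMatrix R u x * G.adjMatrix R u y := by
  have hadj : (localComp G u).Adj x y ↔ Xor (G.Adj x y) (G.Adj u x ∧ G.Adj u y) :=
    (localComp_adj G).trans (and_iff_right hxy)
  have htwo : (1 : R) + 1 = 0 := CharTwo.add_self_eq_zero 1
  simp only [SimpleGraph.adjMatrix_apply, hadj, xor_def]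
  by_cases hxy_adj : G.Adj x y <;> by_cases hux : G.Adj u x <;> by_cases huy : G.Adj u y <;>
    simp [hxy_adj, hux, huy, htwo]

variable {u v : V} {G}

theorem adjMatrix_localComp_of_adj (huv : G.Adj u v) {x : V} (hx : x ≠ v) :
    (localComp G u).adjMatrix R v x = G.adjMatrix R v x + G.adjMatrix R u x := by
  rw [adjMatrix_localComp_of_ne R G u hx.symm]
  simp [huv]

theorem adjMatrix_localComp_localComp_left (huv : G.Adj u v) {x : V} (hxu : x ≠ u)
    (hxv : x ≠ v) :
    (localComp (localComp G u) v).adjMatrix R u x = G.adjMatrix R v x := by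
  have hvu : (localComp G u).adjMatrix R v u = 1 := by
    rw [adjMatrix_localComp_of_adj R huv huv.ne]
    simp [huv.symm]
  rw [adjMatrix_localComp_of_ne R _ v hxu.symm, hvu, adjMatrix_localComp_left,
    adjMatrix_localComp_of_adj R huv hxv]
  linear_combination G.adjMatrix R u x * CharTwo.two_eq_zero (R := R)

theorem adjMatrix_pivot (huv : G.Adj u v) {x y : V} (hxu : x ≠ u) (hxv : x ≠ v)
    (hyu : y ≠ u) (hyv : y ≠ v) :
    (pivot G u v).adjMatrix R x y = G.adjMatrix R x y +
      G.adjMatrix R u x * G.adjMatrix R v y + G.adjMatrix R v x * G.adjMatrix R u y := by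
  obtain rfl | hxy := eq_or_ne x y
  · have hdiag (H : SimpleGraph V) [DecidableRel H.Adj] : H.adjMatrix R x x = 0 := by simp
    rw [hdiag, hdiag]
    linear_combination
      -(G.adjMatrix R u x * G.adjMatrix R v x) * CharTwo.two_eq_zero (R := R)
  · have hpivot : (pivot G u v).adjMatrix R =
        (localComp (localComp (localComp G u) v) u).adjMatrix R := rfl
    rw [hpivot, adjMatrix_localComp_of_ne R _ u hxy, adjMatrix_localComp_of_ne R _ v hxy,
      adjMatrix_localComp_of_ne R _ u hxy,
      adjMatrix_localComp_localComp_left R huv hxu hxv,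
      adjMatrix_localComp_localComp_left R huv hyu hyv,
      adjMatrix_localComp_of_adj R huv hxv, adjMatrix_localComp_of_adj R huv hyv]
    linear_combination (G.adjMatrix R u x * G.adjMatrix R u y +
      G.adjMatrix R v x * G.adjMatrix R v y) * CharTwo.two_eq_zero (R := R)

theorem sum_sdiff_pair_adjMatrix_pivot (huv : G.Adj u v) {x : V} (hxu : x ≠ u) (hxv : x ≠ v)
    (A : Finset V) :
    ∑ y ∈ A \ {u, v}, (pivot G u v).adjMatrix R x y =
      ∑ y ∈ A, G.adjMatrix R x y + G.adjMatrix R u x * ∑ y ∈ A, G.adjMatrix R v y +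
        G.adjMatrix R v x * ∑ y ∈ A, G.adjMatrix R u y := by
  rw [mul_sum, mul_sum, ← sum_add_distrib, ← sum_add_distrib]
  refine sum_subset_zero_on_sdiff sdiff_subset (fun y hy ↦ ?_) fun y hy ↦ ?_
  · have huv_or : y = u ∨ y = v := by
      simpa [(mem_sdiff.1 hy).1, or_iff_not_imp_left] using (mem_sdiff.1 hy).2
    rcases huv_or with rfl | rfl
    · simp [huv.symm, G.adj_comm x, CharTwo.add_self_eq_zero]
    · simp [huv, G.adj_comm x, CharTwo.add_self_eq_zero]
  · obtain ⟨-, hyu, hyv⟩ : y ∈ A ∧ y ≠ u ∧ y ≠ v := by simpa using hy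
    exact adjMatrix_pivot R huv hxu hxv hyu hyv

end AdjMatrix

section OddNbhd

variable [Fintype V] [DecidableEq V] {G : SimpleGraph V} [DecidableRel G.Adj] {A : Finset V}

theorem mem_oddNbhd {x : V} : x ∈ oddNbhd G A ↔ Odd #{y ∈ A | G.Adj x y} := by
  simp only [oddNbhd, mem_filter, mem_univ, true_and]

theorem mem_oddNbhd_iff_sum_adjMatrix {x : V} :
    x ∈ oddNbhd G A ↔ ∑ y ∈ A, G.adjMatrix (ZMod 2) x y = 1 := by
  simp only [mem_oddNbhd, SimpleGraph.adjMatrix_apply, sum_boole, ZMod.natCast_eq_one_iff_odd]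

theorem notMem_oddNbhd_iff_sum_adjMatrix {x : V} :
    x ∉ oddNbhd G A ↔ ∑ y ∈ A, G.adjMatrix (ZMod 2) x y = 0 := by
  simp only [mem_oddNbhd, SimpleGraph.adjMatrix_apply, sum_boole, ZMod.natCast_eq_zero_iff_even,
    Nat.not_odd_iff_even]

theorem mem_oddNbhd_pivot_sdiff_pair {u v x : V} (huv : G.Adj u v) (hxu : x ≠ u) (hxv : x ≠ v)
    (hu : u ∉ oddNbhd G A) (hv : v ∉ oddNbhd G A) :
    x ∈ oddNbhd (pivot G u v) (A \ {u, v}) ↔ x ∈ oddNbhd G A := by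
  rw [notMem_oddNbhd_iff_sum_adjMatrix] at hu hv
  rw [mem_oddNbhd_iff_sum_adjMatrix, mem_oddNbhd_iff_sum_adjMatrix,
    sum_sdiff_pair_adjMatrix_pivot _ huv hxu hxv, hu, hv, mul_zero, mul_zero, add_zero, add_zero]

theorem mem_oddNbhd_comap {W : Type*} [Fintype W] [DecidableEq W] (f : W ↪ V) {B : Finset W}
    {x : W} : x ∈ oddNbhd (G.comap f) B ↔ f x ∈ oddNbhd G (B.map f) := by
  simp only [mem_oddNbhd, filter_map, card_map, Function.comp_def, SimpleGraph.comap_adj]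

theorem mem_oddNbhd_comap_val {p : V → Prop} [DecidablePred p] (hA : ∀ y ∈ A, p y)
    {x : {x // p x}} :
    x ∈ oddNbhd (G.comap (Subtype.val : {x // p x} → V)) (A.subtype p) ↔ x.val ∈ oddNbhd G A := by
  have hmap : (A.subtype p).map (Function.Embedding.subtype p) = A := subtype_map_of_mem hA
  exact (mem_oddNbhd_comap (Function.Embedding.subtype p)).trans
    (by rw [hmap, Function.Embedding.subtype_apply])

theorem IsFocusedGFlow.mem_oddNbhd_iff {I O : Finset V} {g : V → Finset V} {r : V → V → Prop}
    (hg : IsFocusedGFlow G I O g r) {w x : V} (hw : w ∉ O) (hx : x ∉ O) :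
    x ∈ oddNbhd G (g w) ↔ x = w := by
  rw [← mem_singleton, ← (hg.2.2 w hw).2.1, mem_sdiff, and_iff_left hx]

end OddNbhd

theorem isFocusedGFlow_pivot_delete_general [Fintype V] [DecidableEq V]
    (G : SimpleGraph V) [DecidableRel G.Adj] (I O : Finset V)
    (g : V → Finset V) (r : V → V → Prop) (hg : IsFocusedGFlow G I O g r)
    (u v : V) (huv : G.Adj u v) (hu : u ∉ O) (hv : v ∉ O) :
    IsFocusedGFlow
      ((pivot G u v).comap (Subtype.val : {x : V // x ≠ u ∧ x ≠ v} → V))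
      (I.subtype (fun x => x ≠ u ∧ x ≠ v)) (O.subtype (fun x => x ≠ u ∧ x ≠ v))
      (fun w => ((g w.val) \ {u, v}).subtype (fun x => x ≠ u ∧ x ≠ v))
      (fun a b => r a.val b.val) := by
  refine ⟨fun a ↦ hg.1 a, fun a b c ↦ hg.2.1 a b c, ?_⟩
  rintro ⟨w, hwu, hwv⟩ hwO
  have hw : w ∉ O := by simpa only [mem_subtype] using hwO
  obtain ⟨hI, hodd, hr⟩ := hg.2.2 w hw
  have hu_even : u ∉ oddNbhd G (g w) := (hg.mem_oddNbhd_iff hw hu).not.2 hwu.symm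
  have hv_even : v ∉ oddNbhd G (g w) := (hg.mem_oddNbhd_iff hw hv).not.2 hwv.symm
  refine ⟨?_, ?_, fun y hy ↦ hr y (mem_sdiff.1 (mem_subtype.1 hy)).1⟩
  · rw [← disjoint_iff_inter_eq_empty] at hI ⊢
    exact disjoint_left.2 fun y hy hyI ↦
      disjoint_left.1 hI (mem_sdiff.1 (mem_subtype.1 hy)).1 (mem_subtype.1 hyI)
  · ext ⟨x, hxu, hxv⟩
    rw [mem_sdiff, mem_subtype, mem_singleton, Subtype.mk.injEq, ← mem_singleton, ← hodd,
      mem_sdiff, mem_oddNbhd_comap_val (by simp),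
      mem_oddNbhd_pivot_sdiff_pair huv hxu hxv hu_even hv_even]

theorem isFocusedGFlow_pivot_delete [Fintype V] [DecidableEq V]
    (G : SimpleGraph V) [DecidableRel G.Adj] (I O : Finset V)
    (g : V → Finset V) (r : V → V → Prop) (hg : IsFocusedGFlow G I O g r)
    (u v : V) (huv : G.Adj u v) (hu : u ∉ I ∪ O) (hv : v ∉ I ∪ O) :
    IsFocusedGFlow
      ((pivot G u v).comap (Subtype.val : {x : V // x ≠ u ∧ x ≠ v} → V))
      (I.subtype (fun x => x ≠ u ∧ x ≠ v)) (O.subtype (fun x => x ≠ u ∧ x ≠ v))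
      (fun w => ((g w.val) \ {u, v}).subtype (fun x => x ≠ u ∧ x ≠ v))
      (fun a b => r a.val b.val) :=
  isFocusedGFlow_pivot_delete_general G I O g r hg u v huv
    (notMem_union.1 hu).2 (notMem_union.1 hv).2
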